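/- Let f₀ and f₁ be the densities of the multivariate Gaussian distributions N(m₀, Σ₀) and N(m₁, Σ₁) on ℝ^d, with Σ₀, Σ₁ symmetric positive definite, let h ≠ 0 be a real number, and define the generalized score S(y) := (1/h) ln(f₁(y)/f₀(y)). If y is distributed according to N(m₀, Σ₀), then the generalized Fisher information, defined as E[(S(y) − E[S(y)])²], equals (1/h²)·[ (1/2)·tr((A Σ₀)²) + bᵀ Σ₀ b + m₀ᵀ A Σ₀ A m₀ − 2·m₀ᵀ A Σ₀ b ], where A := Σ₁⁻¹ − Σ₀⁻¹ and b := Σ₁⁻¹ m₁ − Σ₀⁻¹ m₀. -/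

import Mathlib

open Matrix MeasureTheory

/-- Density of the multivariate Gaussian `N(μ, Σ)` on `ℝ^d`. -/
noncomputable def gaussianDensity {d : ℕ} (μ : Fin d → ℝ)
    (S : Matrix (Fin d) (Fin d) ℝ) (w : Fin d → ℝ) : ℝ :=
  (2 * Real.pi) ^ (-(d : ℝ) / 2) * S.det ^ (-(1 : ℝ) / 2) *
    Real.exp (-(1 / 2) * ((w - μ) ⬝ᵥ S⁻¹.mulVec (w - μ)))

/-- Generalized score function for two Gaussian densities and test point `h`. -/
noncomputable def genScore {d : ℕ} (m₀ m₁ : Fin d → ℝ)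
    (S₀ S₁ : Matrix (Fin d) (Fin d) ℝ) (h : ℝ) (y : Fin d → ℝ) : ℝ :=
  (1 / h) * Real.log (gaussianDensity m₁ S₁ y / gaussianDensity m₀ S₀ y)

open ProbabilityTheory

lemma gfi_moments : (∫ x, x ∂gaussianReal 0 1 = 0) ∧ (∫ x, x^2 ∂gaussianReal 0 1 = 1) ∧
   (∫ x, x^3 ∂gaussianReal 0 1 = 0) ∧ (∫ x, x^4 ∂gaussianReal 0 1 = 3) := by
  have key : ∀ n, ∫ x, x^n ∂gaussianReal 0 1 = iteratedDeriv n (fun t : ℝ ↦ Real.exp (t^2/2)) 0 := by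
    intro n
    have := iteratedDeriv_mgf_zero (X := id) (μ := gaussianReal 0 1) (by simp) n
    rw [mgf_id_gaussianReal] at this
    simpa using this.symm
  have e : ∀ t : ℝ, HasDerivAt (fun t : ℝ ↦ Real.exp (t^2/2)) (t * Real.exp (t^2/2)) t := by
    intro t
    have := ((hasDerivAt_pow 2 t).div_const 2).exp
    convert this using 1
    simp; ring
  have st : ∀ (p p' q : ℝ → ℝ), (∀ t, HasDerivAt p (p' t) t) → (∀ t, q t = p' t + t * p t) →
      deriv (fun t ↦ p t * Real.exp (t^2/2)) = fun t ↦ q t * Real.exp (t^2/2) := by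
    intro p p' q hp hq
    ext t
    have := ((hp t).mul (e t)).deriv
    rw [hq]; refine Eq.trans this ?_; ring
  have d1 : deriv (fun t : ℝ ↦ Real.exp (t^2/2)) = fun t ↦ t * Real.exp (t^2/2) := by
    ext t; exact (e t).deriv
  have d2 := st (fun t ↦ t) (fun _ ↦ 1) (fun t ↦ 1 + t^2) (fun t ↦ hasDerivAt_id t) (fun t ↦ by ring)
  have d3 := st (fun t ↦ 1 + t^2) (fun t ↦ 2*t) (fun t ↦ 3*t + t^3)
    (fun t ↦ by simpa using (hasDerivAt_pow 2 t).const_add 1) (fun t ↦ by ring)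
  have d4 := st (fun t ↦ 3*t + t^3) (fun t ↦ 3+3*t^2) (fun t ↦ 3+6*t^2+t^4)
    (fun t ↦ by
      have := ((hasDerivAt_id t).const_mul 3).add (hasDerivAt_pow 3 t)
      simp only [mul_one] at this
      exact this.congr_deriv (by simp)) (fun t ↦ by ring)
  refine ⟨?_, ?_, ?_, ?_⟩
  · simp
  all_goals
    rw [key]
    simp only [iteratedDeriv_succ', iteratedDeriv_zero, d1, d2, d3, d4]
    simp

lemma gfi_int (n : ℕ) : Integrable (fun x : ℝ ↦ x^n) (gaussianReal 0 1) := by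
  have := (memLp_id_gaussianReal (μ := 0) (v := 1) n).integrable_norm_pow' 
  refine (integrable_norm_iff (by fun_prop)).1 ?_
  simpa using this

lemma gfi_memLp (D c : ℝ) : MemLp (fun x : ℝ ↦ D * x^2 + c * x) 2 (gaussianReal 0 1) := by
  rw [memLp_two_iff_integrable_sq (by fun_prop)]
  have := (((gfi_int 4).const_mul (D^2)).add ((gfi_int 3).const_mul (2*D*c))).add ((gfi_int 2).const_mul (c^2))
  refine this.congr (Filter.Eventually.of_forall fun x ↦ ?_)
  simp; ring

lemma gfi_var (D c : ℝ) : Var[fun x : ℝ ↦ D * x^2 + c * x; gaussianReal 0 1] = 2 * D^2 + c^2 := by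
  obtain ⟨h1, h2, h3, h4⟩ := gfi_moments
  have i1 := gfi_int 1
  simp only [pow_one] at i1
  rw [variance_eq_sub (gfi_memLp D c)]
  have a : ∫ x, D * x^2 + c * x ∂gaussianReal 0 1 = D := by
    rw [integral_add ((gfi_int 2).const_mul _) (i1.const_mul _), integral_const_mul, integral_const_mul, h1, h2]
    ring
  have b : ∫ x, ((fun x : ℝ ↦ D * x^2 + c * x)^2) x ∂gaussianReal 0 1 = 3 * D^2 + c^2 := by
    have : ((fun x : ℝ ↦ D * x^2 + c * x)^2) = fun x ↦ (D^2 * x^4 + (2*D*c) * x^3) + c^2 * x^2 := by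
      ext x; simp; ring
    have i2 : Integrable (fun x : ℝ ↦ D^2 * x^4 + (2*D*c) * x^3) (gaussianReal 0 1) :=
      ((gfi_int 4).const_mul (D^2)).add ((gfi_int 3).const_mul (2*D*c))
    rw [this, integral_add i2 ((gfi_int 2).const_mul (c^2)),
      integral_add ((gfi_int 4).const_mul (D^2)) ((gfi_int 3).const_mul (2*D*c))]
    simp only [integral_const_mul, h2, h3, h4]
    ring
  rw [a, b]; ring

lemma gfi_pi (d : ℕ) : Measure.pi (fun _ : Fin d ↦ gaussianReal 0 1) =
    volume.withDensity (fun z ↦ ENNReal.ofReal (∏ i, gaussianPDFReal 0 1 (z i))) := by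
  refine Measure.pi_eq (fun s hs ↦ ?_)
  rw [withDensity_apply _ (MeasurableSet.univ_pi hs), ← ofReal_integral_eq_lintegral_ofReal]
  · rw [volume_pi, Measure.restrict_pi_pi, integral_fintype_prod_eq_prod (f := fun _ x ↦ gaussianPDFReal 0 1 x),
      ENNReal.ofReal_prod_of_nonneg]
    · refine Finset.prod_congr rfl fun i _ ↦ ?_
      rw [gaussianReal_apply_eq_integral _ one_ne_zero]
    · intro i _
      exact integral_nonneg fun x ↦ gaussianPDFReal_nonneg _ _ _
  · rw [volume_pi, Measure.restrict_pi_pi]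
    exact Integrable.fintype_prod (f := fun _ x ↦ gaussianPDFReal 0 1 x) fun i ↦ (integrable_gaussianPDFReal 0 1).restrict
  · exact Filter.Eventually.of_forall fun z ↦ Finset.prod_nonneg fun i _ ↦ gaussianPDFReal_nonneg _ _ _

lemma gfi_pi_integral (d : ℕ) (F : (Fin d → ℝ) → ℝ) : ∫ z, F z ∂Measure.pi (fun _ : Fin d ↦ gaussianReal 0 1) =
    ∫ z, F z * ((2 * Real.pi) ^ (-(d : ℝ) / 2) * Real.exp (-(1/2) * (z ⬝ᵥ z))) := by
  rw [gfi_pi, integral_withDensity_eq_integral_toReal_smul]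
  · refine integral_congr_ae (Filter.Eventually.of_forall fun z ↦ ?_)
    have h0 : 0 ≤ ∏ i, gaussianPDFReal 0 1 (z i) := Finset.prod_nonneg fun i _ ↦ gaussianPDFReal_nonneg _ _ _
    simp only [ENNReal.toReal_ofReal h0, smul_eq_mul]
    rw [mul_comm]
    congr 1
    simp only [gaussianPDFReal, Finset.prod_mul_distrib, ← Real.exp_sum]
    congr 1
    · simp only [NNReal.coe_one, mul_one, Finset.prod_const, Finset.card_univ, Fintype.card_fin]
      rw [ Real.sqrt_eq_rpow, ← Real.rpow_neg (by positivity), ← Real.rpow_natCast,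
        ← Real.rpow_mul (by positivity)]
      congr 1; ring
    · congr 1
      simp only [dotProduct, Finset.mul_sum]
      refine Finset.sum_congr rfl fun i _ ↦ ?_
      simp; ring
  · fun_prop
  · simp

lemma gfi_change (d : ℕ) (L : Matrix (Fin d) (Fin d) ℝ) (hL : L.det ≠ 0) (m : Fin d → ℝ) (G : (Fin d → ℝ) → ℝ) :
    ∫ y, G y = ∫ z, |L.det| * G (m + L *ᵥ z) := by
  rw [integral_const_mul, ← integral_add_left_eq_self (μ := volume) G m]
  have hm := Real.map_matrix_volume_pi_eq_smul_volume_pi hL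
  have he : MeasurableEmbedding (Matrix.toLin' L) := by
    have := Matrix.isUnit_iff_isUnit_det L |>.2 (isUnit_iff_ne_zero.2 hL)
    exact (LinearMap.continuous_of_finiteDimensional (Matrix.toLin' L)).measurableEmbedding
      (by rw [Matrix.toLin'_apply']; exact Matrix.mulVec_injective_of_isUnit this)
  have h2 := he.integral_map (μ := volume) (fun x ↦ G (m + x))
  rw [hm, integral_smul_measure] at h2
  simp only [Matrix.toLin'_apply] at h2
  rw [← h2, ENNReal.toReal_ofReal (abs_nonneg _), smul_eq_mul, ← mul_assoc, abs_inv, mul_inv_cancel₀ (abs_ne_zero.2 hL), one_mul]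

open scoped MatrixOrder Matrix.Norms.L2Operator in
lemma gfi_sqrt (d : ℕ) (S : Matrix (Fin d) (Fin d) ℝ) (hS : S.PosDef) :
    ∃ B : Matrix (Fin d) (Fin d) ℝ, S = Bᵀ * B := by
  obtain ⟨B, hB⟩ := CStarAlgebra.nonneg_iff_eq_star_mul_self.1 hS.posSemidef.nonneg
  exact ⟨B, by rw [hB, star_eq_conjTranspose, conjTranspose_eq_transpose_of_trivial]⟩

lemma gfi_diag (d : ℕ) (S A : Matrix (Fin d) (Fin d) ℝ) (hS : S.PosDef) (hA : Aᵀ = A) :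
    ∃ (L : Matrix (Fin d) (Fin d) ℝ) (D : Fin d → ℝ), L * Lᵀ = S ∧ Lᵀ * A * L = diagonal D := by
  obtain ⟨B, hB⟩ := gfi_sqrt d S hS
  have hM : (B * A * Bᵀ).IsHermitian := by
    rw [Matrix.IsHermitian, conjTranspose_eq_transpose_of_trivial]
    simp [transpose_mul, hA, Matrix.mul_assoc]
  obtain ⟨U, hU⟩ : ∃ U, U = (hM.eigenvectorUnitary : Matrix (Fin d) (Fin d) ℝ) := ⟨_, rfl⟩
  have h1 : Uᵀ * U = 1 := by
    have := Unitary.coe_star_mul_self hM.eigenvectorUnitary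
    rwa [star_eq_conjTranspose, conjTranspose_eq_transpose_of_trivial, ← hU] at this
  have h2 := hM.spectral_theorem
  rw [Unitary.conjStarAlgAut_apply, star_eq_conjTranspose, conjTranspose_eq_transpose_of_trivial, ← hU] at h2
  refine ⟨Bᵀ * U, hM.eigenvalues, ?_, ?_⟩
  · have h3 : U * Uᵀ = 1 := mul_eq_one_comm.1 h1
    rw [transpose_mul, transpose_transpose, Matrix.mul_assoc, ← Matrix.mul_assoc U, h3, Matrix.one_mul, hB]
  · calc (Bᵀ * U)ᵀ * A * (Bᵀ * U) = Uᵀ * (B * A * Bᵀ) * U := by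
          simp [transpose_mul, Matrix.mul_assoc]
      _ = (Uᵀ * U) * diagonal (RCLike.ofReal ∘ hM.eigenvalues) * (Uᵀ * U) := by
          refine (congrArg (fun M ↦ Uᵀ * M * U) h2).trans ?_
          simp only [Matrix.mul_assoc]
      _ = _ := by rw [h1]; simp

lemma gfi_push (d : ℕ) (L S : Matrix (Fin d) (Fin d) ℝ) (hS : S.PosDef) (hL : L * Lᵀ = S)
    (m : Fin d → ℝ) (F : (Fin d → ℝ) → ℝ) :
    ∫ y, F y * gaussianDensity m S y =
      ∫ z, F (m + L *ᵥ z) ∂Measure.pi (fun _ : Fin d ↦ gaussianReal 0 1) := by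
  have hdet : S.det = L.det ^ 2 := by rw [← hL, det_mul, det_transpose, sq]
  have hL0 : L.det ≠ 0 := by
    intro h0
    have := hS.det_pos
    rw [hdet, h0] at this
    simp at this
  rw [gfi_change d L hL0 m, gfi_pi_integral]
  have hI : Lᵀ * S⁻¹ * L = 1 := by
    have hu : IsUnit L.det := isUnit_iff_ne_zero.2 hL0
    have hu' : IsUnit Lᵀ.det := by rwa [det_transpose]
    rw [← hL, Matrix.mul_inv_rev, ← Matrix.mul_assoc, Matrix.mul_nonsing_inv _ hu', Matrix.one_mul,
      Matrix.nonsing_inv_mul _ hu]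
  have hd : S.det ^ (-(1 : ℝ) / 2) = |L.det|⁻¹ := by
    rw [hdet, ← sq_abs, ← Real.rpow_natCast, ← Real.rpow_mul (abs_nonneg _), ← Real.rpow_neg_one]
    norm_num
  refine integral_congr_ae (Filter.Eventually.of_forall fun z ↦ ?_)
  have hq : (L *ᵥ z) ⬝ᵥ S⁻¹ *ᵥ (L *ᵥ z) = z ⬝ᵥ z := by
    rw [dotProduct_comm, ← Matrix.dotProduct_transpose_mulVec, Matrix.mulVec_mulVec, Matrix.mulVec_mulVec, hI, one_mulVec]
  simp only [gaussianDensity, add_sub_cancel_left, hd, hq]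
  have := abs_ne_zero.2 hL0
  field_simp

lemma gfi_score {d : ℕ} (m₀ m₁ : Fin d → ℝ) (S₀ S₁ : Matrix (Fin d) (Fin d) ℝ)
    (hS₀ : S₀.PosDef) (hS₁ : S₁.PosDef) (h : ℝ)
    (A : Matrix (Fin d) (Fin d) ℝ) (b : Fin d → ℝ)
    (hA : A = S₁⁻¹ - S₀⁻¹)
    (hb : b = S₁⁻¹.mulVec m₁ - S₀⁻¹.mulVec m₀)  :
    ∃ K, ∀ x, genScore m₀ m₁ S₀ S₁ h (m₀ + x) = K + (1/h) * (-(1/2) * (x ⬝ᵥ A *ᵥ x) + x ⬝ᵥ (b - A *ᵥ m₀)) := by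
  have hp : ∀ S : Matrix (Fin d) (Fin d) ℝ, S.PosDef → 
      0 < (2 * Real.pi) ^ (-(d : ℝ) / 2) * S.det ^ (-(1 : ℝ) / 2) := fun S hS ↦ by
    have := hS.det_pos
    positivity
  have hlog : ∀ (m : Fin d → ℝ) (S : Matrix (Fin d) (Fin d) ℝ), S.PosDef → ∀ y, Real.log (gaussianDensity m S y) =
      Real.log ((2 * Real.pi) ^ (-(d : ℝ) / 2) * S.det ^ (-(1 : ℝ) / 2)) + -(1 / 2) * ((y - m) ⬝ᵥ S⁻¹.mulVec (y - m)) := by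
    intro m S hS y
    rw [gaussianDensity, Real.log_mul (hp S hS).ne' (Real.exp_pos _).ne', Real.log_exp]
  have hne : ∀ (m : Fin d → ℝ) (S : Matrix (Fin d) (Fin d) ℝ), S.PosDef → ∀ y, gaussianDensity m S y ≠ 0 :=
    fun m S hS y ↦ (mul_pos (hp S hS) (Real.exp_pos _)).ne'
  have hT : (S₁⁻¹)ᵀ = S₁⁻¹ := by
    have := hS₁.inv.1
    rwa [Matrix.IsHermitian, conjTranspose_eq_transpose_of_trivial] at this
  refine ⟨(1/h) * (Real.log ((2 * Real.pi) ^ (-(d : ℝ) / 2) * S₁.det ^ (-(1 : ℝ) / 2)) -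
    Real.log ((2 * Real.pi) ^ (-(d : ℝ) / 2) * S₀.det ^ (-(1 : ℝ) / 2)) 
    - 1/2 * ((m₀ - m₁) ⬝ᵥ S₁⁻¹ *ᵥ (m₀ - m₁))), fun x ↦ ?_⟩
  rw [genScore, Real.log_div (hne _ _ hS₁ _) (hne _ _ hS₀ _), hlog _ _ hS₁, hlog _ _ hS₀, ← mul_add]
  congr 1
  have e1 : b - A *ᵥ m₀ = - (S₁⁻¹ *ᵥ (m₀ - m₁)) := by
    rw [hA, hb, sub_mulVec, mulVec_sub]; abel
  have e2 : m₀ + x - m₁ = x + (m₀ - m₁) := by abel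
  rw [e1, e2, add_sub_cancel_left, hA, sub_mulVec]
  generalize m₀ - m₁ = e
  have e3 : e ⬝ᵥ S₁⁻¹ *ᵥ x = x ⬝ᵥ S₁⁻¹ *ᵥ e := by
    conv_lhs => rw [← hT]
    rw [Matrix.dotProduct_transpose_mulVec, dotProduct_comm]
    try rw [dotProduct_comm]
  simp only [mulVec_add, dotProduct_add, add_dotProduct, dotProduct_neg, dotProduct_sub, e3]
  ring

theorem generalized_fisher_information
    {d : ℕ} (m₀ m₁ : Fin d → ℝ) (S₀ S₁ : Matrix (Fin d) (Fin d) ℝ)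
    (hS₀ : S₀.PosDef) (hS₁ : S₁.PosDef) (h : ℝ) (hh : h ≠ 0)
    (A : Matrix (Fin d) (Fin d) ℝ) (b : Fin d → ℝ)
    (hA : A = S₁⁻¹ - S₀⁻¹)
    (hb : b = S₁⁻¹.mulVec m₁ - S₀⁻¹.mulVec m₀) :
    ∫ y : Fin d → ℝ,
        (genScore m₀ m₁ S₀ S₁ h y -
          ∫ z : Fin d → ℝ, genScore m₀ m₁ S₀ S₁ h z * gaussianDensity m₀ S₀ z) ^ 2 *
          gaussianDensity m₀ S₀ y =
      (1 / h ^ 2) * ((1 / 2) * ((A * S₀) ^ 2).trace + b ⬝ᵥ S₀.mulVec b +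
        m₀ ⬝ᵥ A.mulVec (S₀.mulVec (A.mulVec m₀)) -
        2 * (m₀ ⬝ᵥ A.mulVec (S₀.mulVec b))) := by
  have hAT : Aᵀ = A := by
    have h1 := hS₁.inv.1
    have h0 := hS₀.inv.1
    rw [Matrix.IsHermitian, conjTranspose_eq_transpose_of_trivial] at h0 h1
    rw [hA, transpose_sub, h0, h1]
  obtain ⟨L, D, hL, hD⟩ := gfi_diag d S₀ A hS₀ hAT
  obtain ⟨K, hK⟩ := gfi_score m₀ m₁ S₀ S₁ hS₀ hS₁ h A b hA hb
  rw [gfi_push d L S₀ hS₀ hL m₀ (fun z ↦ genScore m₀ m₁ S₀ S₁ h z),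
    gfi_push d L S₀ hS₀ hL m₀ (fun y ↦ (genScore m₀ m₁ S₀ S₁ h y - _)^2)]
  obtain ⟨c, hc⟩ : ∃ c, c = Lᵀ *ᵥ (b - A *ᵥ m₀) := ⟨_, rfl⟩
  have hs : (fun z ↦ genScore m₀ m₁ S₀ S₁ h (m₀ + L *ᵥ z)) =
      fun z ↦ K + (∑ i, fun z : Fin d → ℝ ↦ (-(1/(2*h)) * D i) * (z i)^2 + ((1/h) * c i) * z i) z := by
    ext z
    rw [hK]
    have q1 : (L *ᵥ z) ⬝ᵥ A *ᵥ (L *ᵥ z) = ∑ i, D i * (z i)^2 := by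
      rw [dotProduct_comm, ← Matrix.dotProduct_transpose_mulVec, Matrix.mulVec_mulVec, Matrix.mulVec_mulVec, hD]
      simp only [dotProduct, mulVec_diagonal]
      exact Finset.sum_congr rfl fun i _ ↦ by ring
    have q2 : (L *ᵥ z) ⬝ᵥ (b - A *ᵥ m₀) = ∑ i, c i * z i := by
      rw [dotProduct_comm, ← Matrix.dotProduct_transpose_mulVec, ← hc, dotProduct_comm]
      rfl
    rw [q1, q2, Finset.sum_apply, Finset.mul_sum, ← Finset.sum_add_distrib, Finset.mul_sum]
    congr 1
    refine Finset.sum_congr rfl fun i _ ↦ ?_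
    field_simp
  have hml := fun i ↦ gfi_memLp (-(1/(2*h)) * D i) ((1/h) * c i)
  have hv := variance_sum_pi (μ := fun _ : Fin d ↦ gaussianReal 0 1) hml
  simp only [gfi_var] at hv
  have hsm : AEStronglyMeasurable (∑ i, fun z : Fin d → ℝ ↦ (-(1/(2*h)) * D i) * (z i)^2 + ((1/h) * c i) * z i)
      (Measure.pi (fun _ : Fin d ↦ gaussianReal 0 1)) := by
    apply Measurable.aestronglyMeasurable
    fun_prop
  have hv2 := variance_const_add hsm K
  rw [← hs, hv, variance_eq_integral] at hv2
  · rw [hv2]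
    have t1 : ((A * S₀)^2).trace = ∑ i, (D i)^2 := by
      have : (A * S₀)^2 = (A * L) * (Lᵀ * A * L * Lᵀ) := by
        rw [← hL, sq]; simp only [Matrix.mul_assoc]
      rw [this, trace_mul_comm]
      have : Lᵀ * A * L * Lᵀ * (A * L) = (Lᵀ * A * L) * (Lᵀ * A * L) := by simp only [Matrix.mul_assoc]
      rw [this, hD, diagonal_mul_diagonal, trace_diagonal]
      exact Finset.sum_congr rfl fun i _ ↦ by ring
    have hS0 : S₀ᵀ = S₀ := by
      have h0 := hS₀.1
      rwa [Matrix.IsHermitian, conjTranspose_eq_transpose_of_trivial] at h0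
    have sym : ∀ (M : Matrix (Fin d) (Fin d) ℝ) (u v : Fin d → ℝ), Mᵀ = M → u ⬝ᵥ M *ᵥ v = v ⬝ᵥ M *ᵥ u := by
      intro M u v hM
      conv_lhs => rw [← hM]
      rw [Matrix.dotProduct_transpose_mulVec]
    have t2 : ∑ i, (c i)^2 = b ⬝ᵥ S₀.mulVec b +
        m₀ ⬝ᵥ A.mulVec (S₀.mulVec (A.mulVec m₀)) - 2 * (m₀ ⬝ᵥ A.mulVec (S₀.mulVec b)) := by
      have : ∑ i, (c i)^2 = c ⬝ᵥ c := Finset.sum_congr rfl fun i _ ↦ by ring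
      rw [this, hc, Matrix.dotProduct_transpose_mulVec, mulVec_mulVec, hL, sym A m₀ _ hAT, sym A m₀ _ hAT]
      rw [dotProduct_comm (S₀ *ᵥ b), dotProduct_comm (S₀ *ᵥ _) (A *ᵥ m₀)]
      simp only [mulVec_sub, dotProduct_sub, sub_dotProduct]
      rw [sym S₀ b (A *ᵥ m₀) hS0]
      ring
    have t3 : (1 / h ^ 2) * ((1 / 2) * (∑ i, (D i)^2) + ∑ i, (c i)^2) = 
       ∑ i, (2 * (-(1/(2*h)) * D i)^2 + ((1/h) * c i)^2) := by
      rw [Finset.mul_sum, ← Finset.sum_add_distrib, Finset.mul_sum]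
      refine Finset.sum_congr rfl fun i _ ↦ ?_
      field_simp
      try ring
    rw [← t3, t1, t2]; ring
  · rw [hs]
    exact (hsm.const_add K).aemeasurable
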